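/- Let s₁,…,s_{n+1} > 0 with ∑ s_i = n and p₁,…,p_{n+1} ∈ (1,∞) with ∑ 1/p_i = 1, and set w_i(t) = t^{1−s_i−1/p_i}. Then ∏_{i=1}^{n+1} w_i(t) = 1 for all t > 0, and consequently for smooth extensions U¹,…,Uⁿ,Φ of u¹,…,uⁿ,φ ∈ C_c^∞(ℝⁿ), |∫_{ℝⁿ} det(∇_x u¹,…,∇_x uⁿ) φ dx| ≤ ∏_{i=1}^n ‖t^{1−s_i−1/p_i} ∇_{x,t}U^i‖_{L^{p_i}(ℝ^{n+1}_+)} · ‖t^{1−s_{n+1}−1/p_{n+1}} ∇_{x,t}Φ‖_{L^{p_{n+1}}(ℝ^{n+1}_+)}. -/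

import Mathlib

open MeasureTheory
open scoped ENNReal BigOperators

/-- The `j`-th coordinate direction in the upper half space model `ℝⁿ × ℝ`:
for `j < n` it is the `j`-th horizontal direction, for `j = n` the vertical (`t`) direction. -/
noncomputable def dir {n : ℕ} (j : Fin (n + 1)) : EuclideanSpace ℝ (Fin n) × ℝ :=
  if h : (j : ℕ) < n then (EuclideanSpace.single ⟨j, h⟩ 1, 0) else (0, 1)

/-- The `(n+1)×(n+1)` matrix whose `i`-th row is the full gradient `∇_{x,t} V^i`. -/
noncomputable def bulkMatrix {n : ℕ}
    (V : Fin (n + 1) → (EuclideanSpace ℝ (Fin n) × ℝ → ℝ))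
    (p : EuclideanSpace ℝ (Fin n) × ℝ) : Matrix (Fin (n + 1)) (Fin (n + 1)) ℝ :=
  Matrix.of fun i j => fderiv ℝ (V i) p (dir j)

/-- The `n×n` matrix whose `i`-th row is the gradient `∇_x u^i`. -/
noncomputable def bdryMatrix {n : ℕ} (u : Fin n → (EuclideanSpace ℝ (Fin n) → ℝ))
    (x : EuclideanSpace ℝ (Fin n)) : Matrix (Fin n) (Fin n) ℝ :=
  Matrix.of fun i j => fderiv ℝ (u i) x (EuclideanSpace.single j 1)

/-- The open upper half space `ℝ^{n+1}_+ = ℝⁿ × (0,∞)`. -/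
def upperHalf (n : ℕ) : Set (EuclideanSpace ℝ (Fin n) × ℝ) := {p | 0 < p.2}

noncomputable def detCMM (m : ℕ) : ContinuousMultilinearMap ℝ (fun _ : Fin m => Fin m → ℝ) ℝ :=
  { (Matrix.detRowAlternating (n := Fin m) (R := ℝ)).toMultilinearMap with
    cont := by
      change Continuous (fun M : Matrix (Fin m) (Fin m) ℝ => M.det)
      exact Continuous.matrix_det continuous_id }

lemma detCMM_apply {m : ℕ} (M : Fin m → Fin m → ℝ) : detCMM m M = Matrix.det (Matrix.of M) := rfl

lemma antisymm_sum {m : ℕ} (R : Fin m → Fin m → ℝ) (i k : Fin m) (hik : i ≠ k)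
    (H : Fin m → Fin m → ℝ) (hH : ∀ j l, H j l = H l j) :
    ∑ j, detCMM m (Function.update (Function.update R k (Pi.single j 1)) i (H j)) = 0 := by
  have h1 : ∀ j, detCMM m (Function.update (Function.update R k (Pi.single j 1)) i (H j))
      = ∑ l, H j l * detCMM m (Function.update (Function.update R k (Pi.single j 1)) i
          (Pi.single l 1)) := by
    intro j
    have : H j = ∑ l, H j l • (Pi.single l 1 : Fin m → ℝ) := by
      ext a; simp [Finset.sum_apply, Pi.single_apply]
    conv_lhs => rw [this]
    simp only [← ContinuousMultilinearMap.coe_coe]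
    rw [MultilinearMap.map_update_sum]
    simp
  have h2 : ∀ j l, detCMM m (Function.update (Function.update R k (Pi.single j 1)) i
          (Pi.single l 1)) = - detCMM m (Function.update (Function.update R k (Pi.single l 1)) i
          (Pi.single j 1)) := by
    intro j l
    have := (Matrix.detRowAlternating (n := Fin m) (R := ℝ)).map_swap
      (Function.update (Function.update R k (Pi.single l 1)) i (Pi.single j 1)) hik
    change _ = - (Matrix.detRowAlternating (n := Fin m) (R := ℝ)) _
    rw [← this]
    change (Matrix.detRowAlternating (n := Fin m) (R := ℝ)) _ = _
    congr 1
    funext a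
    by_cases ha : a = i
    · subst ha; simp [Function.update_of_ne hik.symm]
    · by_cases hk : a = k
      · subst hk; simp [Function.update_of_ne hik.symm]
      · simp [Function.update_of_ne ha, Function.update_of_ne hk, Equiv.swap_apply_of_ne_of_ne ha hk]
  simp only [h1]
  have h3 : ∑ j, ∑ l, H j l * detCMM m (Function.update (Function.update R k (Pi.single j 1)) i
          (Pi.single l 1)) = - ∑ j, ∑ l, H j l * detCMM m (Function.update (Function.update R k (Pi.single j 1)) i
          (Pi.single l 1)) := by
    conv_lhs => rw [Finset.sum_comm]
    rw [← Finset.sum_neg_distrib]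
    refine Finset.sum_congr rfl fun j _ => ?_
    rw [← Finset.sum_neg_distrib]
    refine Finset.sum_congr rfl fun l _ => ?_
    rw [h2 l j, hH l j]; ring
  linarith

section
variable {E : Type*} [NormedAddCommGroup E] [NormedSpace ℝ E]

noncomputable def cof {m : ℕ} (V : Fin m → E → ℝ) (d : Fin m → E) (k j : Fin m) (q : E) : ℝ :=
  detCMM m (Function.update (fun i l => fderiv ℝ (V i) q (d l)) k (Pi.single j 1))

lemma cof_contDiff {m : ℕ} (V : Fin m → E → ℝ) (d : Fin m → E) (k j : Fin m)
    (hV : ∀ i, ContDiff ℝ (⊤ : ℕ∞) (V i)) : ContDiff ℝ (⊤ : ℕ∞) (cof V d k j) := by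
  unfold cof
  refine (detCMM m).contDiff.comp ?_
  rw [contDiff_pi]
  intro i
  by_cases h : i = k
  · subst h; simpa using contDiff_const
  · simp only [Function.update_of_ne h]
    rw [contDiff_pi]
    intro l
    exact ((hV i).fderiv_right (m := (⊤ : ℕ∞)) (by simp)).clm_apply contDiff_const

lemma piola {m : ℕ} (V : Fin m → E → ℝ) (d : Fin m → E) (k : Fin m)
    (hV : ∀ i, ContDiff ℝ (⊤ : ℕ∞) (V i)) (q : E) :
    ∑ j, fderiv ℝ (cof V d k j) q (d j) = 0 := by
  have hd : ∀ i, HasFDerivAt (fderiv ℝ (V i)) (fderiv ℝ (fderiv ℝ (V i)) q) q := fun i =>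
    (((hV i).fderiv_right (m := (⊤ : ℕ∞)) (by simp)).differentiable (by simp) q).hasFDerivAt
  set R : Fin m → Fin m → ℝ := fun i l => fderiv ℝ (V i) q (d l) with hR
  have key : ∀ j, fderiv ℝ (cof V d k j) q (d j) = ∑ i, if i = k then 0 else
      detCMM m (Function.update (Function.update R k (Pi.single j 1)) i
        (fun l => fderiv ℝ (fderiv ℝ (V i)) q (d j) (d l))) := by
    intro j
    let g : Fin m → E → Fin m → ℝ := fun i x =>
      (Function.update (fun i l => fderiv ℝ (V i) x (d l)) k (Pi.single j 1) : Fin m → Fin m → ℝ) i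
    let g' : Fin m → E →L[ℝ] (Fin m → ℝ) := fun i =>
      if i = k then 0 else ContinuousLinearMap.pi fun l =>
        (fderiv ℝ (fderiv ℝ (V i)) q).flip (d l)
    have hg : ∀ i, HasFDerivAt (g i) (g' i) q := by
      intro i
      by_cases h : i = k
      · subst h
        simpa [g, g'] using hasFDerivAt_const (𝕜 := ℝ) (Pi.single j 1 : Fin m → ℝ) q
      · simp only [g, g', Function.update_of_ne h, if_neg h]
        rw [hasFDerivAt_pi]
        intro l
        have := (hd i).clm_apply (hasFDerivAt_const (d l) q)
        simpa using this
    have := HasFDerivAt.multilinear_comp (f := detCMM m) hg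
    have h2 : HasFDerivAt (cof V d k j) _ q := this
    rw [h2.fderiv]
    simp only [sum_apply]
    refine Finset.sum_congr rfl fun i _ => ?_
    by_cases h : i = k
    · simp [g', h]
    · simp only [g', h, if_false]
      rfl
  simp only [key]
  rw [Finset.sum_comm]
  refine Finset.sum_eq_zero fun i _ => ?_
  by_cases h : i = k
  · simp [h]
  · simp only [h, if_false]
    refine antisymm_sum R i k h _ ?_
    intro j l
    exact ((hV i).contDiffAt.isSymmSndFDerivAt (by
      rw [minSmoothness_of_isRCLikeNormedField]
      exact WithTop.coe_le_coe.2 (le_top (a := (2 : ℕ∞))))) (d j) (d l)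

lemma det_eq_div {m : ℕ} (V : Fin m → E → ℝ) (d : Fin m → E) (k : Fin m)
    (hV : ∀ i, ContDiff ℝ (⊤ : ℕ∞) (V i)) (q : E) :
    (Matrix.of fun i l => fderiv ℝ (V i) q (d l)).det =
      ∑ j, fderiv ℝ (fun x => V k x * cof V d k j x) q (d j) := by
  have h1 : ∀ j, fderiv ℝ (fun x => V k x * cof V d k j x) q (d j) =
      V k q * fderiv ℝ (cof V d k j) q (d j) + fderiv ℝ (V k) q (d j) * cof V d k j q := by
    intro j
    rw [fderiv_fun_mul ((hV k).differentiable (by simp) q)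
      ((cof_contDiff V d k j hV).differentiable (by simp) q)]
    simp [mul_comm]
  simp only [h1, Finset.sum_add_distrib, ← Finset.mul_sum, piola V d k hV q]
  rw [Matrix.det_eq_sum_mul_adjugate_row _ k]
  simp only [Matrix.adjugate_apply, mul_zero, zero_add]
  rfl

end

lemma hadamard {m : ℕ} (M : Matrix (Fin m) (Fin m) ℝ) :
    |M.det| ≤ ∏ i, ‖WithLp.toLp 2 (M i)‖ := by
  have : Fact (Module.finrank ℝ (EuclideanSpace ℝ (Fin m)) = m) := ⟨by simp⟩
  let b := EuclideanSpace.basisFun (Fin m) ℝ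
  have := b.toBasis.orientation.abs_volumeForm_apply_le (fun i => WithLp.toLp 2 (M i))
  rw [Orientation.volumeForm_robust' _ b] at this
  convert this using 2
  rw [Module.Basis.det_apply, ← Matrix.det_transpose]
  rfl

lemma rownorm {n : ℕ} (L : EuclideanSpace ℝ (Fin n) × ℝ →L[ℝ] ℝ) :
    ‖WithLp.toLp 2 (fun j : Fin (n + 1) => L (dir j))‖ ≤ ‖L‖ := by
  set a : Fin (n + 1) → ℝ := fun j => L (dir j) with ha
  set N := ‖WithLp.toLp 2 a‖ with hN
  have hN0 : 0 ≤ N := norm_nonneg _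
  have hN2 : N ^ 2 = ∑ j, a j ^ 2 := by
    rw [hN, EuclideanSpace.norm_sq_eq]; simp
  set v : EuclideanSpace ℝ (Fin n) × ℝ :=
    (WithLp.toLp 2 (fun j : Fin n => a j.castSucc), a (Fin.last n)) with hv
  have hvs : v = ∑ j, a j • dir j := by
    rw [Fin.sum_univ_castSucc]
    refine Prod.ext ?_ ?_
    · ext l
      simp [hv, dir, Prod.fst_sum, Finset.sum_apply, Pi.single_apply]
    · simp [hv, dir, Prod.snd_sum]
  have hLv : L v = N ^ 2 := by
    rw [hvs, map_sum, hN2]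
    refine Finset.sum_congr rfl fun j _ => ?_
    simp [ha, sq]
  have hvN : ‖v‖ ≤ N := by
    rw [Prod.norm_def]
    refine max_le ?_ ?_
    · refine (sq_le_sq₀ (norm_nonneg _) hN0).1 ?_
      rw [hN2, EuclideanSpace.norm_sq_eq, Fin.sum_univ_castSucc]
      simp [hv, sq_nonneg]
    · refine (sq_le_sq₀ (norm_nonneg _) hN0).1 ?_
      rw [hN2, Fin.sum_univ_castSucc]
      simp only [hv, Real.norm_eq_abs, sq_abs]
      have : 0 ≤ ∑ i : Fin n, a i.castSucc ^ 2 := Finset.sum_nonneg fun i _ => sq_nonneg _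
      linarith
  have h : N ^ 2 ≤ ‖L‖ * N := by
    rw [← hLv]
    refine (le_abs_self _).trans ((L.le_opNorm v).trans ?_)
    gcongr
  rcases hN0.eq_or_lt with h0 | h0
  · rw [← h0]; exact norm_nonneg _
  · nlinarith

lemma det_bulk_le {n : ℕ} (V : Fin (n + 1) → (EuclideanSpace ℝ (Fin n) × ℝ → ℝ))
    (q : EuclideanSpace ℝ (Fin n) × ℝ) :
    |(bulkMatrix V q).det| ≤ ∏ i, ‖fderiv ℝ (V i) q‖ := by
  refine (hadamard _).trans ?_
  refine Finset.prod_le_prod (fun i _ => norm_nonneg _) fun i _ => ?_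
  exact rownorm (fderiv ℝ (V i) q)

lemma restrict_upper (n : ℕ) : (volume.restrict (upperHalf n) :
    Measure (EuclideanSpace ℝ (Fin n) × ℝ)) = volume.prod (volume.restrict (Set.Ioi 0)) := by
  have : upperHalf n = Set.univ ×ˢ Set.Ioi 0 := by
    ext q; simp [upperHalf]
  rw [this, Measure.volume_eq_prod, ← Measure.prod_restrict, Measure.restrict_univ]

section
variable {n : ℕ} {f : EuclideanSpace ℝ (Fin n) × ℝ → ℝ}

lemma integrable_fd (hf : ContDiff ℝ (⊤ : ℕ∞) f) (hf' : HasCompactSupport f)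
    (v : EuclideanSpace ℝ (Fin n) × ℝ) : Integrable (fun q => fderiv ℝ f q v) volume := by
  refine Continuous.integrable_of_hasCompactSupport ?_ (hf'.fderiv_apply (𝕜 := ℝ) v)
  exact (hf.continuous_fderiv (by simp)).clm_apply continuous_const

lemma slice_left (hf' : HasCompactSupport f) (t : ℝ) : HasCompactSupport (fun x => f (x, t)) := by
  refine HasCompactSupport.intro (hf'.isCompact.image continuous_fst) ?_
  intro x hx
  by_contra h
  exact hx ⟨(x, t), subset_tsupport _ h, rfl⟩

lemma slice_right (hf' : HasCompactSupport f) (x : EuclideanSpace ℝ (Fin n)) :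
    HasCompactSupport (fun t => f (x, t)) := by
  refine HasCompactSupport.intro (hf'.isCompact.image continuous_snd) ?_
  intro t hx
  by_contra h
  exact hx ⟨(x, t), subset_tsupport _ h, rfl⟩

lemma int_horiz (hf : ContDiff ℝ (⊤ : ℕ∞) f) (hf' : HasCompactSupport f)
    (e : EuclideanSpace ℝ (Fin n)) :
    ∫ q in upperHalf n, fderiv ℝ f q (e, 0) = 0 := by
  have hi := (integrable_fd hf hf' (e, 0)).restrict (s := upperHalf n)
  rw [restrict_upper] at hi ⊢
  rw [integral_prod_symm _ hi]
  refine integral_eq_zero_of_ae (Filter.Eventually.of_forall fun t => ?_)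
  have hg : ContDiff ℝ (⊤ : ℕ∞) (fun x => f (x, t)) := hf.comp (contDiff_prodMk_left t)
  have hgc := slice_left hf' t
  have hd : ∀ x, fderiv ℝ f (x, t) (e, 0) = fderiv ℝ (fun x => f (x, t)) x e := by
    intro x
    have h1 := ((hf.differentiable (by simp)) (x, t)).hasFDerivAt
    have h2 := h1.comp x (hasFDerivAt_prodMk_left (𝕜 := ℝ) x t)
    have h3 : HasFDerivAt (fun x => f (x, t)) _ x := h2
    rw [h3.fderiv]; simp
  simp only [hd]
  have hig : Integrable (fun x => fderiv ℝ (fun x => f (x, t)) x e) volume := by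
    refine Continuous.integrable_of_hasCompactSupport ?_ (hgc.fderiv_apply (𝕜 := ℝ) e)
    exact (hg.continuous_fderiv (by simp)).clm_apply continuous_const
  have := integral_mul_fderiv_eq_neg_fderiv_mul_of_integrable (μ := volume)
    (f := fun _ : EuclideanSpace ℝ (Fin n) => (1 : ℝ)) (g := fun x => f (x, t)) (v := e)
    (by simp) (by simpa using hig)
    (by simpa using hg.continuous.integrable_of_hasCompactSupport hgc)
    (fun x _ => by fun_prop) (fun x _ => hg.differentiable (by simp) x)
  simpa using this

lemma int_vert (hf : ContDiff ℝ (⊤ : ℕ∞) f) (hf' : HasCompactSupport f) :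
    ∫ q in upperHalf n, fderiv ℝ f q (0, 1) = - ∫ x, f (x, 0) := by
  have hi := (integrable_fd hf hf' (0, 1)).restrict (s := upperHalf n)
  rw [restrict_upper] at hi ⊢
  rw [integral_prod _ hi, ← integral_neg]
  congr 1
  funext x
  have hg : ContDiff ℝ (⊤ : ℕ∞) (fun t => f (x, t)) := hf.comp (contDiff_prodMk_right x)
  have hgc := slice_right hf' x
  have hd : ∀ t, fderiv ℝ f (x, t) (0, 1) = deriv (fun t => f (x, t)) t := by
    intro t
    have h1 := ((hf.differentiable (by simp)) (x, t)).hasFDerivAt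
    have h2 := h1.comp t (hasFDerivAt_prodMk_right (𝕜 := ℝ) x t)
    have h3 : HasFDerivAt (fun t => f (x, t)) _ t := h2
    rw [← fderiv_apply_one_eq_deriv, h3.fderiv]; simp
  simp only [hd]
  exact HasCompactSupport.integral_Ioi_deriv_eq (hg.of_le (by exact_mod_cast le_top)) hgc 0

end

lemma stokes {n : ℕ} (V : Fin (n + 1) → (EuclideanSpace ℝ (Fin n) × ℝ → ℝ))
    (hV : ∀ i, ContDiff ℝ (⊤ : ℕ∞) (V i)) (hV' : HasCompactSupport (V (Fin.last n))) :
    ∫ q in upperHalf n, (bulkMatrix V q).det =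
      - ∫ x, V (Fin.last n) (x, 0) * cof V dir (Fin.last n) (Fin.last n) (x, 0) := by
  have h0 : ∀ q, (bulkMatrix V q).det = _ := fun q => det_eq_div V dir (Fin.last n) hV q
  have hc : ∀ j, ContDiff ℝ (⊤ : ℕ∞) (fun x => V (Fin.last n) x * cof V dir (Fin.last n) j x) :=
    fun j => (hV _).mul (cof_contDiff V dir _ j hV)
  have hs : ∀ j, HasCompactSupport (fun x => V (Fin.last n) x * cof V dir (Fin.last n) j x) :=
    fun j => hV'.mul_right
  simp only [h0]
  rw [integral_finsetSum _ fun j _ => (integrable_fd (hc j) (hs j) (dir j)).restrict,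
    Fin.sum_univ_castSucc, Finset.sum_eq_zero, zero_add]
  · have : (dir (Fin.last n) : EuclideanSpace ℝ (Fin n) × ℝ) = (0, 1) := by simp [dir]
    rw [this]
    exact int_vert (hc _) (hs _)
  · intro j _
    have : (dir j.castSucc : EuclideanSpace ℝ (Fin n) × ℝ) = (EuclideanSpace.single j 1, 0) := by
      simp [dir]
    rw [this]
    exact int_horiz (hc _) (hs _) _

lemma cof_bdry {n : ℕ} (u : Fin n → EuclideanSpace ℝ (Fin n) → ℝ)
    (V : Fin (n + 1) → (EuclideanSpace ℝ (Fin n) × ℝ → ℝ))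
    (hV : ∀ i, ContDiff ℝ (⊤ : ℕ∞) (V i)) (hext : ∀ i x, V (Fin.castSucc i) (x, 0) = u i x)
    (x : EuclideanSpace ℝ (Fin n)) :
    cof V dir (Fin.last n) (Fin.last n) (x, 0) = (bdryMatrix u x).det := by
  have hd : ∀ i (e : EuclideanSpace ℝ (Fin n)),
      fderiv ℝ (V (Fin.castSucc i)) (x, 0) (e, 0) = fderiv ℝ (u i) x e := by
    intro i e
    have h1 := (((hV i.castSucc).differentiable (by simp)) (x, 0)).hasFDerivAt
    have h2 := h1.comp x (hasFDerivAt_prodMk_left (𝕜 := ℝ) x (0 : ℝ))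
    have h3 : HasFDerivAt (u i) _ x := h2.congr_of_eventuallyEq
      (Filter.Eventually.of_forall fun y => (hext i y).symm)
    rw [h3.fderiv]; simp
  unfold cof
  rw [detCMM_apply, Matrix.det_succ_row _ (Fin.last n), Finset.sum_eq_single (Fin.last n)]
  · have : (-1 : ℝ) ^ ((Fin.last n : ℕ) + (Fin.last n : ℕ)) = 1 := by
      rw [← two_mul]; simp
    rw [this]
    simp only [Matrix.of_apply, Function.update_self, Pi.single_eq_same, one_mul]
    congr 1
    ext i j
    have hne : (Fin.castSucc i) ≠ Fin.last n := (Fin.castSucc_lt_last i).ne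
    simp [bdryMatrix, Matrix.submatrix, Function.update_of_ne hne, ← hd, dir]
  · intro b _ hb
    simp [Pi.single_apply, hb]
  · simp

lemma weights_one {n : ℕ} (s p : Fin (n + 1) → ℝ) (hsn : ∑ i, s i = n) (hp1 : ∑ i, 1 / p i = 1)
    (t : ℝ) (ht : 0 < t) : ∏ i : Fin (n + 1), t ^ (1 - s i - 1 / p i) = 1 := by
  rw [← Real.rpow_sum_of_pos ht, Finset.sum_sub_distrib, Finset.sum_sub_distrib, hsn, hp1]
  simp

lemma holder {n : ℕ} (V : Fin (n + 1) → (EuclideanSpace ℝ (Fin n) × ℝ → ℝ))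
    (s p : Fin (n + 1) → ℝ) (hsn : ∑ i, s i = n) (hp : ∀ i, 1 < p i) (hp1 : ∑ i, 1 / p i = 1)
    (hV : ∀ i, ContDiff ℝ (⊤ : ℕ∞) (V i)) :
    ENNReal.ofReal |∫ q in upperHalf n, (bulkMatrix V q).det| ≤
      ∏ i, eLpNorm (fun q : EuclideanSpace ℝ (Fin n) × ℝ =>
            q.2 ^ (1 - s i - 1 / p i) * ‖fderiv ℝ (V i) q‖)
          (ENNReal.ofReal (p i)) (volume.restrict (upperHalf n)) := by
  have hm : MeasurableSet (upperHalf n) := measurableSet_lt measurable_const measurable_snd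
  set g : Fin (n + 1) → EuclideanSpace ℝ (Fin n) × ℝ → ℝ := fun i q =>
    q.2 ^ (1 - s i - 1 / p i) * ‖fderiv ℝ (V i) q‖ with hg
  have hgm : ∀ i, Measurable (g i) := fun i => by
    have := ((hV i).continuous_fderiv (by simp)).norm.measurable
    exact (measurable_snd.pow_const _).mul this
  calc ENNReal.ofReal |∫ q in upperHalf n, (bulkMatrix V q).det|
      = ‖∫ q in upperHalf n, (bulkMatrix V q).det‖ₑ := (Real.enorm_eq_ofReal_abs _).symm
    _ ≤ ∫⁻ q in upperHalf n, ‖(bulkMatrix V q).det‖ₑ := enorm_integral_le_lintegral_enorm _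
    _ ≤ ∫⁻ q in upperHalf n, ∏ i, (‖g i q‖ₑ ^ (p i)) ^ (1 / p i) := by
        refine setLIntegral_mono' hm fun q hq => ?_
        have hq : 0 < q.2 := hq
        have h1 : ∀ i, (‖g i q‖ₑ ^ (p i)) ^ (1 / p i) = ENNReal.ofReal (g i q) := by
          intro i
          have : 0 ≤ g i q := by simp only [hg]; positivity
          rw [← ENNReal.rpow_mul, mul_one_div_cancel (by linarith [hp i]), ENNReal.rpow_one,
            Real.enorm_eq_ofReal this]
        simp only [h1]
        rw [← ENNReal.ofReal_prod_of_nonneg fun i _ => by simp only [hg]; positivity,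
          Real.enorm_eq_ofReal_abs]
        refine ENNReal.ofReal_le_ofReal ((det_bulk_le V q).trans (le_of_eq ?_))
        simp only [hg]
        rw [Finset.prod_mul_distrib, weights_one s p hsn hp1 _ hq, one_mul]
    _ ≤ ∏ i, (∫⁻ q in upperHalf n, ‖g i q‖ₑ ^ (p i)) ^ (1 / p i) := by
        refine ENNReal.lintegral_prod_norm_pow_le _ (fun i _ => ?_) hp1 fun i _ => ?_
        · exact ((hgm i).enorm.pow_const _).aemeasurable
        · have := hp i; positivity
    _ = _ := by
        refine Finset.prod_congr rfl fun i _ => ?_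
        have hpi : 0 < p i := by linarith [hp i]
        rw [eLpNorm_eq_lintegral_rpow_enorm_toReal (by simpa using hpi) (by simp),
          ENNReal.toReal_ofReal hpi.le]

/-- Weighted version: with `sᵢ > 0`, `∑ sᵢ = n`, `pᵢ ∈ (1,∞)`, `∑ 1/pᵢ = 1`, the weights
`wᵢ(t) = t^{1-sᵢ-1/pᵢ}` multiply to `1` and consequently the weighted Hölder estimate for
the Jacobian holds. -/
theorem stmt11 {n : ℕ} (u : Fin n → EuclideanSpace ℝ (Fin n) → ℝ)
    (φ : EuclideanSpace ℝ (Fin n) → ℝ)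
    (U : Fin n → EuclideanSpace ℝ (Fin n) × ℝ → ℝ)
    (Φ : EuclideanSpace ℝ (Fin n) × ℝ → ℝ)
    (s : Fin (n + 1) → ℝ) (hs : ∀ i, 0 < s i) (hsn : ∑ i, s i = n)
    (p : Fin (n + 1) → ℝ) (hp : ∀ i, 1 < p i) (hp1 : ∑ i, 1 / p i = 1)
    (hu : ∀ i, ContDiff ℝ (⊤ : ℕ∞) (u i)) (hu' : ∀ i, HasCompactSupport (u i))
    (hφ : ContDiff ℝ (⊤ : ℕ∞) φ) (hφ' : HasCompactSupport φ)
    (hU : ∀ i, ContDiff ℝ (⊤ : ℕ∞) (U i)) (hU' : ∀ i, HasCompactSupport (U i))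
    (hΦ : ContDiff ℝ (⊤ : ℕ∞) Φ) (hΦ' : HasCompactSupport Φ)
    (hext : ∀ i x, U i (x, 0) = u i x) (hextφ : ∀ x, Φ (x, 0) = φ x) :
    (∀ t : ℝ, 0 < t → ∏ i : Fin (n + 1), t ^ (1 - s i - 1 / p i) = 1) ∧
    ENNReal.ofReal |∫ x, (bdryMatrix u x).det * φ x| ≤
      (∏ i : Fin n,
        eLpNorm (fun q : EuclideanSpace ℝ (Fin n) × ℝ =>
            q.2 ^ (1 - s (Fin.castSucc i) - 1 / p (Fin.castSucc i)) * ‖fderiv ℝ (U i) q‖)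
          (ENNReal.ofReal (p (Fin.castSucc i))) (volume.restrict (upperHalf n))) *
      eLpNorm (fun q : EuclideanSpace ℝ (Fin n) × ℝ =>
          q.2 ^ (1 - s (Fin.last n) - 1 / p (Fin.last n)) * ‖fderiv ℝ Φ q‖)
        (ENNReal.ofReal (p (Fin.last n))) (volume.restrict (upperHalf n)) := by
  refine ⟨fun t ht => weights_one s p hsn hp1 t ht, ?_⟩
  let V : Fin (n + 1) → (EuclideanSpace ℝ (Fin n) × ℝ → ℝ) :=
    Fin.snoc (α := fun _ => EuclideanSpace ℝ (Fin n) × ℝ → ℝ) U Φ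
  have hVl : V (Fin.last n) = Φ := by simp [V]
  have hVc : ∀ i : Fin n, V i.castSucc = U i := fun i => by simp [V]
  have hV : ∀ i, ContDiff ℝ (⊤ : ℕ∞) (V i) := by
    intro i
    refine Fin.lastCases ?_ (fun i => ?_) i
    · rw [hVl]; exact hΦ
    · rw [hVc]; exact hU i
  have h1 := stokes V hV (by rw [hVl]; exact hΦ')
  have h2 := holder V s p hsn hp hp1 hV
  rw [h1, abs_neg, Fin.prod_univ_castSucc] at h2
  simp only [hVl, hVc, hextφ,
    cof_bdry u V hV (fun i x => by rw [hVc]; exact hext i x)] at h2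
  simpa only [mul_comm (φ _)] using h2
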